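/- Let ℛ = ℂ[z^6, z^8+z^9] + z^{36}ℂ⟦z⟧, whose value semigroup is Γ = ⟨6,8,25⟩, and let D = {10,17,19,23,27,29,35} (a subset of the gap set of Γ). Then there exist standard modules 𝓜 with D_𝓜 = D∪{2} and standard modules 𝓜 with D_𝓜 = D∪{4}, but there is no standard module 𝓜 with D_𝓜 = D∪{2,4}. -/

import Mathlib

open PowerSeries

noncomputable section

/-- `𝒪 = ℂ⟦z⟧`, the ring of formal power series over `ℂ`. -/
abbrev 𝒪 : Type := PowerSeries ℂ

/-- `ν(f)`: the order of a power series (least `n` with nonzero coefficient);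
only meaningful for `f ≠ 0`. -/
noncomputable def ord (f : 𝒪) : ℕ := sInf {n : ℕ | PowerSeries.coeff n f ≠ 0}

/-- The value semigroup `Γ = {ν(x) : 0 ≠ x ∈ ℛ}` of a subalgebra `ℛ ⊆ 𝒪`. -/
def SGamma (R : Subalgebra ℂ 𝒪) : Set ℕ := {n | ∃ x ∈ R, x ≠ (0:𝒪) ∧ ord x = n}

/-- The set of gaps `G = ℕ ∖ Γ`. -/
def Gaps (R : Subalgebra ℂ 𝒪) : Set ℕ := (SGamma R)ᶜ

/-- `Δ` is a `Γ`-module: `Γ + Δ ⊆ Δ`. -/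
def IsGammaModule (Γ Δ : Set ℕ) : Prop := ∀ a ∈ Γ, ∀ d ∈ Δ, a + d ∈ Δ

/-- `Δ_𝓜 = {ν(x) : 0 ≠ x ∈ 𝓜}` for an `ℛ`-submodule `𝓜 ⊆ 𝒪`. -/
def DeltaM (R : Subalgebra ℂ 𝒪) (M : Submodule ↥R 𝒪) : Set ℕ :=
  {n | ∃ x ∈ M, x ≠ (0:𝒪) ∧ ord x = n}

/-- `D_𝓜 = Δ_𝓜 ∩ G`, the set of added gaps. -/
def Dset (R : Subalgebra ℂ 𝒪) (M : Submodule ↥R 𝒪) : Set ℕ := DeltaM R M ∩ Gaps R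

/-- A standard module: a finitely generated `ℛ`-submodule of `𝒪` containing an
element of order `0`. -/
def IsStd (R : Subalgebra ℂ 𝒪) (M : Submodule ↥R 𝒪) : Prop :=
  M.FG ∧ ∃ x ∈ M, x ≠ (0:𝒪) ∧ ord x = 0

/-- `c ≥ 1` is the conductor of `ℛ`: the minimal exponent with `z^c𝒪 ⊆ ℛ`. -/
def HasConductor (R : Subalgebra ℂ 𝒪) (c : ℕ) : Prop :=
  1 ≤ c ∧ (∀ f : 𝒪, (PowerSeries.X : 𝒪)^c * f ∈ R) ∧
    ∀ c' : ℕ, (∀ f : 𝒪, (PowerSeries.X : 𝒪)^c' * f ∈ R) → c ≤ c'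

/-- `z^j𝒪` as a `ℂ`-submodule of `𝒪`. -/
def zO (j : ℕ) : Submodule ℂ 𝒪 :=
  LinearMap.range (LinearMap.mulLeft ℂ ((PowerSeries.X : 𝒪)^j))

/-- `𝔪𝓜` as a `ℂ`-submodule of `𝒪`, where `𝔪 = {x ∈ ℛ : x = 0 or ν(x) > 0}`
is the maximal ideal of `ℛ`. -/
def mSmul (R : Subalgebra ℂ 𝒪) (M : Submodule ↥R 𝒪) : Submodule ℂ 𝒪 :=
  Submodule.span ℂ {z : 𝒪 | ∃ r ∈ (R : Set 𝒪), ∃ y ∈ M, (r = 0 ∨ 0 < ord r) ∧ z = r * y}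

/-- `dim_ℂ (A / B)` for `ℂ`-subspaces; intended for `B ≤ A`. -/
noncomputable def quotDim (A B : Submodule ℂ 𝒪) : ℕ :=
  Module.finrank ℂ (↥A ⧸ Submodule.comap A.subtype B)

/-- `D_i = D_0 ∪ {g_1, …, g_i}` (the gaps `g` are indexed by `1, …, m`). -/
def DFlagSet (D0 : Set ℕ) (g : ℕ → ℕ) (i : ℕ) : Set ℕ := D0 ∪ g '' Set.Icc 1 i

/-- `(D_0, …, D_m)` with `D_i = D_0 ∪ {g_1 < … < g_i}` is a `D`-flag:
all `Δ_i = Γ ∪ D_i` are `Γ`-modules. -/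
def IsDFlag (R : Subalgebra ℂ 𝒪) (m : ℕ) (D0 : Set ℕ) (g : ℕ → ℕ) : Prop :=
  D0 ⊆ Gaps R ∧ StrictMonoOn g (Set.Icc 1 m) ∧
  (∀ i, 1 ≤ i → i ≤ m → g i ∈ Gaps R \ D0) ∧
  (∀ i ≤ m, IsGammaModule (SGamma R) (SGamma R ∪ DFlagSet D0 g i))

/-- A `D`-flag is admissible if it is realized by a flag of standard modules. -/
def IsAdmissibleFlag (R : Subalgebra ℂ 𝒪) (m : ℕ) (D0 : Set ℕ) (g : ℕ → ℕ) : Prop :=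
  ∃ MM : ℕ → Submodule ↥R 𝒪, (∀ i, i < m → MM i ≤ MM (i+1)) ∧
    ∀ i ≤ m, IsStd R (MM i) ∧ Dset R (MM i) = DFlagSet D0 g i

/-- The subalgebra `ℂ[z^a, z^b + z^c] + z^N ℂ⟦z⟧` of `𝒪`. -/
def Rring (a b c N : ℕ) : Subalgebra ℂ 𝒪 where
  carrier := {f : 𝒪 | ∃ p ∈ Algebra.adjoin ℂ
      ({(PowerSeries.X : 𝒪)^a, (PowerSeries.X : 𝒪)^b + (PowerSeries.X : 𝒪)^c} : Set 𝒪),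
    ∃ g : 𝒪, f = p + (PowerSeries.X : 𝒪)^N * g}
  mul_mem' := by
    rintro x y ⟨p, hp, gx, rfl⟩ ⟨q, hq, gy, rfl⟩
    exact ⟨p * q, mul_mem hp hq,
      p * gy + gx * q + (PowerSeries.X : 𝒪)^N * (gx * gy), by ring⟩
  one_mem' := ⟨1, one_mem _, 0, by ring⟩
  add_mem' := by
    rintro x y ⟨p, hp, gx, rfl⟩ ⟨q, hq, gy, rfl⟩
    exact ⟨p + q, add_mem hp hq, gx + gy, by ring⟩
  zero_mem' := ⟨0, zero_mem _, 0, by ring⟩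
  algebraMap_mem' := fun r => ⟨algebraMap ℂ 𝒪 r, Subalgebra.algebraMap_mem _ r, 0, by ring⟩

/-- The ring `ℂ⟦z^4, z^{2u}+z^v⟧ = ℂ[z^4, z^{2u}+z^v] + z^{4u+v}ℂ⟦z⟧` for the
plane curve singularity with Puiseux exponents `(4, 2u, v)`. -/
def Rcal (u v : ℕ) : Subalgebra ℂ 𝒪 := Rring 4 (2*u) v (4*u+v)

/-- The gap counting function `γ_Δ(ℓ) = |[ℓ,∞) ∖ Δ|`. -/
noncomputable def gapCount (Δ : Set ℕ) (ℓ : ℕ) : ℕ := Set.ncard {k : ℕ | ℓ ≤ k ∧ k ∉ Δ}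

/-- `n = n(D)`: the smallest odd number in `(Δ ∪ {v}) ∩ [2u, ∞)`. -/
noncomputable def nOdd (u v : ℕ) (Δ : Set ℕ) : ℕ :=
  sInf {k : ℕ | Odd k ∧ 2*u ≤ k ∧ (k ∈ Δ ∨ k = v)}

/-- The dimension change `μ_{D,g}` of Theorem `dimprop` (for the family `(4,2u,v)`),
where `Γ` is the value semigroup. -/
noncomputable def muDim (u v : ℕ) (Γ : Set ℕ) (D : Set ℕ) (gp : ℕ) : ℕ :=
  let Δ : Set ℕ := Γ ∪ D
  let Δ' : Set ℕ := Δ ∪ {gp}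
  let n : ℕ := nOdd u v Δ
  if gp % 4 = 2 then
    (gapCount Δ' gp - gapCount Δ' (gp+4)) - (gapCount Δ' (gp+n) - gapCount Δ' (gp+4+n))
  else gapCount Δ' gp - gapCount Δ' (gp+4)


theorem ord_spec (f : 𝒪) (n : ℕ) (hf : f ≠ 0) (h : ord f = n) :
    coeff n f ≠ 0 ∧ ∀ m < n, coeff m f = 0 := by
  have hne : {n : ℕ | coeff n f ≠ 0}.Nonempty := by
    by_contra hcon
    rw [Set.not_nonempty_iff_eq_empty] at hcon
    apply hf
    ext k
    have : k ∉ {n : ℕ | coeff n f ≠ 0} := by rw [hcon]; simp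
    simpa using this
  subst h
  refine ⟨Nat.sInf_mem hne, fun m hm => ?_⟩
  have := Nat.notMem_of_lt_sInf hm
  simpa using this

theorem ord_of (f : 𝒪) (n : ℕ) (h : coeff n f ≠ 0) (h' : ∀ m < n, coeff m f = 0) :
    f ≠ 0 ∧ ord f = n := by
  refine ⟨fun h0 => h (by simp [h0]), ?_⟩
  apply le_antisymm
  · exact Nat.sInf_le h
  · by_contra hlt
    push Not at hlt
    have hm : ord f ∈ {n : ℕ | coeff n f ≠ 0} := Nat.sInf_mem ⟨n, h⟩
    exact hm (h' _ hlt)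

/-- The ring of the statement. -/
abbrev RR : Subalgebra ℂ 𝒪 := Rring 6 8 9 36

theorem x_mem : (X : 𝒪) ^ 6 ∈ RR :=
  ⟨X ^ 6, Algebra.subset_adjoin (by simp), 0, by ring⟩

theorem y_mem : (X : 𝒪) ^ 8 + X ^ 9 ∈ RR :=
  ⟨X ^ 8 + X ^ 9, Algebra.subset_adjoin (by simp), 0, by ring⟩

theorem tail_mem (g : 𝒪) : (X : 𝒪) ^ 36 * g ∈ RR :=
  ⟨0, zero_mem _, g, by ring⟩

/-- A subspace stable under the generators is stable under the ring. -/
theorem stable (Q : Submodule ℂ 𝒪) (hx : ∀ f ∈ Q, (X : 𝒪) ^ 6 * f ∈ Q)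
    (hy : ∀ f ∈ Q, ((X : 𝒪) ^ 8 + X ^ 9) * f ∈ Q)
    (ht : ∀ f : 𝒪, (X : 𝒪) ^ 36 * f ∈ Q) (r : 𝒪) (hr : r ∈ RR) :
    ∀ f ∈ Q, r * f ∈ Q := by
  obtain ⟨p, hp, g, rfl⟩ := hr
  have key : ∀ f ∈ Q, p * f ∈ Q := by
    induction hp using Algebra.adjoin_induction with
    | mem u hu =>
      rcases hu with rfl | rfl
      · exact hx
      · exact hy
    | algebraMap c =>
      intro f hf
      rw [← Algebra.smul_def]
      exact Q.smul_mem c hf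
    | add u v _ _ hu hv =>
      intro f hf
      rw [add_mul]
      exact Q.add_mem (hu f hf) (hv f hf)
    | mul u v _ _ hu hv =>
      intro f hf
      rw [mul_assoc]
      exact hu _ (hv _ hf)
  intro f hf
  rw [add_mul, mul_assoc]
  exact Q.add_mem (key f hf) (ht _)

/-- Linear conditions satisfied by the elements of the ring. -/
def QR : Submodule ℂ 𝒪 where
  carrier := {f | coeff 1 f = 0 ∧ coeff 2 f = 0 ∧ coeff 3 f = 0 ∧ coeff 4 f = 0 ∧
    coeff 5 f = 0 ∧ coeff 7 f = 0 ∧ coeff 9 f = coeff 8 f ∧ coeff 10 f = 0 ∧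
    coeff 11 f = 0 ∧ coeff 13 f = 0 ∧ coeff 15 f = coeff 14 f ∧
    coeff 17 f = 2 * coeff 16 f ∧ coeff 19 f = 0 ∧ coeff 21 f = coeff 20 f ∧
    coeff 23 f = 2 * coeff 22 f ∧ coeff 27 f = coeff 26 f - (2/3) * coeff 25 f ∧
    coeff 29 f = 2 * coeff 28 f ∧
    coeff 35 f = 2 * coeff 34 f - (8/3) * coeff 33 f + (8/3) * coeff 32 f
      - (16/9) * coeff 31 f}
  zero_mem' := by simp
  add_mem' := by
    rintro a b ⟨a1, a2, a3, a4, a5, a7, a9, a10, a11, a13, a15, a17, a19, a21, a23, a27, a29, a35⟩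
      ⟨b1, b2, b3, b4, b5, b7, b9, b10, b11, b13, b15, b17, b19, b21, b23, b27, b29, b35⟩
    refine ⟨?_, ?_, ?_, ?_, ?_, ?_, ?_, ?_, ?_, ?_, ?_, ?_, ?_, ?_, ?_, ?_, ?_, ?_⟩ <;>
    simp only [map_add, *] <;> ring
  smul_mem' := by
    rintro c a ⟨a1, a2, a3, a4, a5, a7, a9, a10, a11, a13, a15, a17, a19, a21, a23, a27, a29, a35⟩
    refine ⟨?_, ?_, ?_, ?_, ?_, ?_, ?_, ?_, ?_, ?_, ?_, ?_, ?_, ?_, ?_, ?_, ?_, ?_⟩ <;>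
    simp only [map_smul, smul_eq_mul, *] <;> ring

theorem QR_x (f : 𝒪) (hf : f ∈ QR) : (X : 𝒪) ^ 6 * f ∈ QR := by
  obtain ⟨a1, a2, a3, a4, a5, a7, a9, a10, a11, a13, a15, a17, a19, a21, a23, a27, a29, a35⟩ := hf
  refine ⟨?_, ?_, ?_, ?_, ?_, ?_, ?_, ?_, ?_, ?_, ?_, ?_, ?_, ?_, ?_, ?_, ?_, ?_⟩ <;>
  simp [coeff_X_pow_mul', *] <;> ring

theorem QR_y (f : 𝒪) (hf : f ∈ QR) : ((X : 𝒪) ^ 8 + X ^ 9) * f ∈ QR := by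
  obtain ⟨a1, a2, a3, a4, a5, a7, a9, a10, a11, a13, a15, a17, a19, a21, a23, a27, a29, a35⟩ := hf
  refine ⟨?_, ?_, ?_, ?_, ?_, ?_, ?_, ?_, ?_, ?_, ?_, ?_, ?_, ?_, ?_, ?_, ?_, ?_⟩ <;>
  simp [add_mul, coeff_X_pow_mul', *] <;> ring

theorem R_le_QR (r : 𝒪) (hr : r ∈ RR) : r ∈ QR := by
  have := stable QR QR_x QR_y ?_ r hr 1 ?_
  · simpa using this
  · intro f
    refine ⟨?_, ?_, ?_, ?_, ?_, ?_, ?_, ?_, ?_, ?_, ?_, ?_, ?_, ?_, ?_, ?_, ?_, ?_⟩ <;>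
    simp [coeff_X_pow_mul']
  · refine ⟨?_, ?_, ?_, ?_, ?_, ?_, ?_, ?_, ?_, ?_, ?_, ?_, ?_, ?_, ?_, ?_, ?_, ?_⟩ <;>
    simp [coeff_one]

theorem gap_of (n : ℕ)
    (hn : n ∈ ({1, 2, 3, 4, 5, 7, 9, 10, 11, 13, 15, 17, 19, 21, 23, 27, 29, 35} : Set ℕ)) :
    n ∈ Gaps RR := by
  rintro ⟨f, hf, hf0, ho⟩
  obtain ⟨h1, h2⟩ := ord_spec f n hf0 ho
  obtain ⟨a1, a2, a3, a4, a5, a7, a9, a10, a11, a13, a15, a17, a19, a21, a23, a27, a29, a35⟩ :=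
    R_le_QR f hf
  simp only [Set.mem_insert_iff, Set.mem_singleton_iff] at hn
  apply h1
  rcases hn with rfl | rfl | rfl | rfl | rfl | rfl | rfl | rfl | rfl | rfl | rfl | rfl | rfl |
    rfl | rfl | rfl | rfl | rfl <;> first | assumption | simp [*]

theorem gam_add (m n : ℕ) (hm : m ∈ SGamma RR) (hn : n ∈ SGamma RR) : m + n ∈ SGamma RR := by
  obtain ⟨f, hf, hf0, hfo⟩ := hm
  obtain ⟨g, hg, hg0, hgo⟩ := hn
  obtain ⟨f1, f2⟩ := ord_spec f m hf0 hfo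
  obtain ⟨g1, g2⟩ := ord_spec g n hg0 hgo
  refine ⟨f * g, mul_mem hf hg, ord_of _ _ ?_ ?_⟩
  · rw [coeff_mul, Finset.sum_eq_single (m, n)]
    · exact mul_ne_zero f1 g1
    · rintro ⟨i, j⟩ hij hne
      rw [Finset.HasAntidiagonal.mem_antidiagonal] at hij
      simp only at hij ⊢
      rcases lt_trichotomy i m with h | h | h
      · rw [f2 i h, zero_mul]
      · exact absurd (Prod.ext h (by simp only; omega)) hne
      · rw [g2 j (by omega), mul_zero]
    · simp
  · intro k hk
    rw [coeff_mul]
    apply Finset.sum_eq_zero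
    rintro ⟨i, j⟩ hij
    rw [Finset.HasAntidiagonal.mem_antidiagonal] at hij
    simp only at hij ⊢
    by_cases h : i < m
    · rw [f2 i h, zero_mul]
    · rw [g2 j (by omega), mul_zero]

theorem gam6 : 6 ∈ SGamma RR := by
  refine ⟨_, x_mem, ord_of _ _ (by simp) ?_⟩
  intro m hm
  rw [coeff_X_pow, if_neg (by omega)]

theorem gam8 : 8 ∈ SGamma RR := by
  refine ⟨_, y_mem, ord_of _ _ (by simp [coeff_X_pow]) ?_⟩
  intro m hm
  rw [map_add, coeff_X_pow, coeff_X_pow, if_neg (by omega), if_neg (by omega), add_zero]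

theorem gam25 : 25 ∈ SGamma RR := by
  have h : 3 * (X : 𝒪) ^ 25 + 3 * X ^ 26 + X ^ 27 ∈ RR := by
    have := sub_mem (pow_mem y_mem 3) (pow_mem x_mem 4)
    convert this using 1
    ring
  have e : 3 * (X : 𝒪) ^ 25 + 3 * X ^ 26 + X ^ 27 = X ^ 25 * (C 3 + C 3 * X + X ^ 2) := by
    simp only [map_ofNat]; ring
  rw [e] at h
  refine ⟨_, h, ord_of _ _ (by simp [coeff_X_pow_mul']) ?_⟩
  intro m hm
  rw [coeff_X_pow_mul', if_neg (by omega)]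

theorem gam36 (n : ℕ) (hn : 36 ≤ n) : n ∈ SGamma RR := by
  refine ⟨_, tail_mem (X ^ (n - 36)), ord_of _ _ ?_ ?_⟩
  · rw [← pow_add, Nat.add_sub_cancel' hn]; simp
  · intro m hm
    rw [← pow_add, Nat.add_sub_cancel' hn, coeff_X_pow, if_neg (by omega)]

theorem gam0 : 0 ∈ SGamma RR := ⟨1, one_mem _, ord_of _ _ (by simp) (by simp)⟩

theorem gaps_sub (n : ℕ) (hn : n ∈ Gaps RR) :
    n ∈ ({1, 2, 3, 4, 5, 7, 9, 10, 11, 13, 15, 17, 19, 21, 23, 27, 29, 35} : Set ℕ) := by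
  by_contra hcon
  apply hn
  have h12 := gam_add _ _ gam6 gam6
  have h14 := gam_add _ _ gam6 gam8
  have h16 := gam_add _ _ gam8 gam8
  have h18 := gam_add _ _ gam6 h12
  have h20 := gam_add _ _ gam6 h14
  have h22 := gam_add _ _ gam6 h16
  have h24 := gam_add _ _ gam6 h18
  have h26 := gam_add _ _ gam6 h20
  have h28 := gam_add _ _ gam6 h22
  have h30 := gam_add _ _ gam6 h24
  have h32 := gam_add _ _ gam6 h26
  have h34 := gam_add _ _ gam6 h28
  have h31 := gam_add _ _ gam6 gam25
  have h33 := gam_add _ _ gam8 gam25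
  rcases le_or_gt 36 n with h | h
  · exact gam36 n h
  · simp only [Set.mem_insert_iff, Set.mem_singleton_iff, not_or] at hcon
    interval_cases n <;> first
      | assumption
      | exact gam0
      | exact gam6
      | exact gam8
      | exact gam25
      | omega

/-- Linear conditions for the first module. -/
def P1 : Submodule ℂ 𝒪 where
  carrier := {f | coeff 1 f = 0 ∧ coeff 3 f = coeff 2 f ∧ coeff 4 f = 0 ∧
    coeff 5 f = 0 ∧ coeff 7 f = 0 ∧ coeff 9 f = coeff 8 f ∧ coeff 11 f = 2 * coeff 10 f ∧
    coeff 13 f = 0 ∧ coeff 15 f = coeff 14 f ∧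
    coeff 21 f = coeff 20 f - (2/3) * coeff 19 f}
  zero_mem' := by simp
  add_mem' := by
    rintro a b ⟨a1, a2, a3, a4, a5, a6, a7, a8, a9, a10⟩ ⟨b1, b2, b3, b4, b5, b6, b7, b8, b9, b10⟩
    refine ⟨?_, ?_, ?_, ?_, ?_, ?_, ?_, ?_, ?_, ?_⟩ <;>
    simp only [map_add, *] <;> ring
  smul_mem' := by
    rintro c a ⟨a1, a2, a3, a4, a5, a6, a7, a8, a9, a10⟩
    refine ⟨?_, ?_, ?_, ?_, ?_, ?_, ?_, ?_, ?_, ?_⟩ <;>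
    simp only [map_smul, smul_eq_mul, *] <;> ring

theorem P1_stable (r : 𝒪) (hr : r ∈ RR) : ∀ f ∈ P1, r * f ∈ P1 := by
  refine stable P1 ?_ ?_ ?_ r hr
  · rintro f ⟨a1, a2, a3, a4, a5, a6, a7, a8, a9, a10⟩
    refine ⟨?_, ?_, ?_, ?_, ?_, ?_, ?_, ?_, ?_, ?_⟩ <;>
    simp [coeff_X_pow_mul', *]
  · rintro f ⟨a1, a2, a3, a4, a5, a6, a7, a8, a9, a10⟩
    refine ⟨?_, ?_, ?_, ?_, ?_, ?_, ?_, ?_, ?_, ?_⟩ <;>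
    simp [add_mul, coeff_X_pow_mul', *] <;> ring
  · intro f
    refine ⟨?_, ?_, ?_, ?_, ?_, ?_, ?_, ?_, ?_, ?_⟩ <;>
    simp [coeff_X_pow_mul']

/-- Linear conditions for the second module. -/
def P2 : Submodule ℂ 𝒪 where
  carrier := {f | coeff 1 f = coeff 0 f ∧ coeff 2 f = 0 ∧ coeff 3 f = 0 ∧
    coeff 5 f = 0 ∧ coeff 7 f = coeff 6 f ∧ coeff 9 f = 2 * coeff 8 f ∧ coeff 11 f = 0 ∧
    coeff 13 f = coeff 12 f ∧ coeff 15 f = 2 * coeff 14 f ∧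
    coeff 21 f = 2 * coeff 20 f}
  zero_mem' := by simp
  add_mem' := by
    rintro a b ⟨a1, a2, a3, a4, a5, a6, a7, a8, a9, a10⟩ ⟨b1, b2, b3, b4, b5, b6, b7, b8, b9, b10⟩
    refine ⟨?_, ?_, ?_, ?_, ?_, ?_, ?_, ?_, ?_, ?_⟩ <;>
    simp only [map_add, *] <;> ring
  smul_mem' := by
    rintro c a ⟨a1, a2, a3, a4, a5, a6, a7, a8, a9, a10⟩
    refine ⟨?_, ?_, ?_, ?_, ?_, ?_, ?_, ?_, ?_, ?_⟩ <;>
    simp only [map_smul, smul_eq_mul, *] <;> ring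

theorem P2_stable (r : 𝒪) (hr : r ∈ RR) : ∀ f ∈ P2, r * f ∈ P2 := by
  refine stable P2 ?_ ?_ ?_ r hr
  · rintro f ⟨a1, a2, a3, a4, a5, a6, a7, a8, a9, a10⟩
    refine ⟨?_, ?_, ?_, ?_, ?_, ?_, ?_, ?_, ?_, ?_⟩ <;>
    simp [coeff_X_pow_mul', *]
  · rintro f ⟨a1, a2, a3, a4, a5, a6, a7, a8, a9, a10⟩
    refine ⟨?_, ?_, ?_, ?_, ?_, ?_, ?_, ?_, ?_, ?_⟩ <;>
    simp [add_mul, coeff_X_pow_mul', *] <;> ring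
  · intro f
    refine ⟨?_, ?_, ?_, ?_, ?_, ?_, ?_, ?_, ?_, ?_⟩ <;>
    simp [coeff_X_pow_mul']

theorem span_le (P : Submodule ℂ 𝒪) (hP : ∀ r ∈ RR, ∀ f ∈ P, r * f ∈ P) (S : Set 𝒪)
    (hS : ∀ s ∈ S, s ∈ P) (f : 𝒪) (hf : f ∈ Submodule.span ↥RR S) : f ∈ P := by
  induction hf using Submodule.span_induction with
  | mem u hu => exact hS u hu
  | zero => exact P.zero_mem
  | add u v _ _ hu hv => exact P.add_mem hu hv
  | smul r u _ hu => exact hP r r.2 u hu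

set_option maxHeartbeats 2000000 in
theorem exists1 : ∃ M : Submodule ↥RR 𝒪, IsStd RR M ∧
    Dset RR M = ({10, 17, 19, 23, 27, 29, 35} : Set ℕ) ∪ {2} := by
  let S : Set 𝒪 := {1, X ^ 2 + X ^ 3, X ^ 10 + C 2 * X ^ 11, X ^ 17, C 3 * X ^ 19 - C 2 * X ^ 21,
    X ^ 23, X ^ 27, X ^ 29, X ^ 35}
  have hS : S.Finite := by simp [S]
  have hle : ∀ f ∈ Submodule.span ↥RR S, f ∈ P1 := by
    refine span_le P1 P1_stable S ?_
    intro s hs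
    simp only [S, Set.mem_insert_iff, Set.mem_singleton_iff] at hs
    rcases hs with rfl | rfl | rfl | rfl | rfl | rfl | rfl | rfl | rfl <;>
    refine ⟨?_, ?_, ?_, ?_, ?_, ?_, ?_, ?_, ?_, ?_⟩ <;>
    simp [coeff_X_pow, coeff_one, coeff_C_mul]
  have gen : ∀ s ∈ S, ∀ n, coeff n s ≠ 0 → (∀ m < n, coeff m s = 0) →
      n ∈ DeltaM RR (Submodule.span ↥RR S) := fun s hs n h1 h2 =>
    ⟨s, Submodule.subset_span hs, ord_of s n h1 h2⟩
  refine ⟨Submodule.span ↥RR S, ⟨Submodule.fg_span hS, ?_⟩, ?_⟩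
  · exact gen 1 (by simp [S]) 0 (by simp) (by simp)
  ext n
  constructor
  · rintro ⟨⟨f, hf, hf0, ho⟩, hg⟩
    obtain ⟨h1, h2⟩ := ord_spec f n hf0 ho
    obtain ⟨a1, a2, a3, a4, a5, a6, a7, a8, a9, a10⟩ := hle f hf
    have := gaps_sub n hg
    simp only [Set.mem_insert_iff, Set.mem_singleton_iff] at this
    rcases this with rfl | rfl | rfl | rfl | rfl | rfl | rfl | rfl | rfl | rfl | rfl | rfl | rfl |
      rfl | rfl | rfl | rfl | rfl <;> first
      | (simp; done)
      | (exfalso; apply h1; assumption)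
      | (exfalso; apply h1; simp [*]; done)
  · intro hn
    refine ⟨?_, gap_of n ?_⟩
    · simp only [Set.mem_union, Set.mem_insert_iff, Set.mem_singleton_iff] at hn
      rcases hn with (rfl | rfl | rfl | rfl | rfl | rfl | rfl) | rfl
      · exact gen (X ^ 10 + C 2 * X ^ 11) (by simp [S]) _ (by simp [coeff_X_pow])
          (fun m hm => by interval_cases m <;> simp [coeff_X_pow])
      · exact gen (X ^ 17) (by simp [S]) _ (by simp [coeff_X_pow])
          (fun m hm => by interval_cases m <;> simp [coeff_X_pow])
      · exact gen (C 3 * X ^ 19 - C 2 * X ^ 21) (by simp [S]) _ (by simp [coeff_X_pow])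
          (fun m hm => by interval_cases m <;> simp [coeff_X_pow])
      · exact gen (X ^ 23) (by simp [S]) _ (by simp [coeff_X_pow])
          (fun m hm => by interval_cases m <;> simp [coeff_X_pow])
      · exact gen (X ^ 27) (by simp [S]) _ (by simp [coeff_X_pow])
          (fun m hm => by interval_cases m <;> simp [coeff_X_pow])
      · exact gen (X ^ 29) (by simp [S]) _ (by simp [coeff_X_pow])
          (fun m hm => by interval_cases m <;> simp [coeff_X_pow])
      · exact gen (X ^ 35) (by simp [S]) _ (by simp [coeff_X_pow])
          (fun m hm => by interval_cases m <;> simp [coeff_X_pow])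
      · exact gen (X ^ 2 + X ^ 3) (by simp [S]) _ (by simp [coeff_X_pow])
          (fun m hm => by interval_cases m <;> simp [coeff_X_pow])
    · simp only [Set.mem_union, Set.mem_insert_iff, Set.mem_singleton_iff] at hn ⊢
      omega

set_option maxHeartbeats 2000000 in
theorem exists2 : ∃ M : Submodule ↥RR 𝒪, IsStd RR M ∧
    Dset RR M = ({10, 17, 19, 23, 27, 29, 35} : Set ℕ) ∪ {4} := by
  let S : Set 𝒪 := {1 + X ^ 1, X ^ 4, X ^ 10, X ^ 17, X ^ 19, X ^ 23, X ^ 27, X ^ 29, X ^ 35}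
  have hS : S.Finite := by simp [S]
  have hle : ∀ f ∈ Submodule.span ↥RR S, f ∈ P2 := by
    refine span_le P2 P2_stable S ?_
    intro s hs
    simp only [S, Set.mem_insert_iff, Set.mem_singleton_iff] at hs
    rcases hs with rfl | rfl | rfl | rfl | rfl | rfl | rfl | rfl | rfl <;>
    refine ⟨?_, ?_, ?_, ?_, ?_, ?_, ?_, ?_, ?_, ?_⟩ <;>
    simp [coeff_X_pow, coeff_one, coeff_X]
  have gen : ∀ s ∈ S, ∀ n, coeff n s ≠ 0 → (∀ m < n, coeff m s = 0) →
      n ∈ DeltaM RR (Submodule.span ↥RR S) := fun s hs n h1 h2 =>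
    ⟨s, Submodule.subset_span hs, ord_of s n h1 h2⟩
  refine ⟨Submodule.span ↥RR S, ⟨Submodule.fg_span hS, ?_⟩, ?_⟩
  · exact gen (1 + X ^ 1) (Set.mem_insert _ _) 0 (by simp) (fun m hm => absurd hm (Nat.not_lt_zero m))
  ext n
  constructor
  · rintro ⟨⟨f, hf, hf0, ho⟩, hg⟩
    obtain ⟨h1, h2⟩ := ord_spec f n hf0 ho
    obtain ⟨a1, a2, a3, a4, a5, a6, a7, a8, a9, a10⟩ := hle f hf
    have := gaps_sub n hg
    simp only [Set.mem_insert_iff, Set.mem_singleton_iff] at this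
    rcases this with rfl | rfl | rfl | rfl | rfl | rfl | rfl | rfl | rfl | rfl | rfl | rfl | rfl |
      rfl | rfl | rfl | rfl | rfl <;> first
      | (simp; done)
      | (exfalso; apply h1; assumption)
      | (exfalso; apply h1; rw [a1]; exact h2 0 (by norm_num))
      | (exfalso; apply h1; simp [*]; done)
  · intro hn
    refine ⟨?_, gap_of n ?_⟩
    · have mono : ∀ k, (X : 𝒪) ^ k ∈ S → k ∈ DeltaM RR (Submodule.span ↥RR S) := by
        intro k hk
        exact gen _ hk k (by simp) (fun m hm => by rw [coeff_X_pow, if_neg (by omega)])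
      simp only [Set.mem_union, Set.mem_insert_iff, Set.mem_singleton_iff] at hn
      rcases hn with (rfl | rfl | rfl | rfl | rfl | rfl | rfl) | rfl <;>
      exact mono _ (by simp [S])
    · simp only [Set.mem_union, Set.mem_insert_iff, Set.mem_singleton_iff] at hn ⊢
      omega

theorem normalize_elt (M : Submodule ↥RR 𝒪) (n : ℕ) (hn : n ∈ DeltaM RR M) :
    ∃ f ∈ M, coeff n f = 1 ∧ ∀ m < n, coeff m f = 0 := by
  obtain ⟨f, hf, hf0, ho⟩ := hn
  obtain ⟨h1, h2⟩ := ord_spec f n hf0 ho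
  refine ⟨(coeff n f)⁻¹ • f, M.smul_of_tower_mem _ hf, ?_, ?_⟩
  · simp [h1]
  · intro m hm
    simp [h2 m hm]

theorem no_module : ¬ ∃ M : Submodule ↥RR 𝒪, IsStd RR M ∧
    Dset RR M = ({10, 17, 19, 23, 27, 29, 35} : Set ℕ) ∪ {2, 4} := by
  rintro ⟨M, ⟨-, h0⟩, hD⟩
  have key : ∀ n ∈ ({9, 11, 13} : Set ℕ), ∀ g ∈ M, (∀ m < n, coeff m g = 0) → coeff n g = 0 := by
    intro n hn g hg hm
    by_contra hne
    have hd : n ∈ Dset RR M := ⟨⟨g, hg, ord_of g n hne hm⟩, gap_of n (by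
      simp only [Set.mem_insert_iff, Set.mem_singleton_iff] at hn ⊢; omega)⟩
    rw [hD] at hd
    simp only [Set.mem_union, Set.mem_insert_iff, Set.mem_singleton_iff] at hn hd
    omega
  have d2 : 2 ∈ Dset RR M := by rw [hD]; simp
  have d4 : 4 ∈ Dset RR M := by rw [hD]; simp
  obtain ⟨f, hf, f0, -⟩ := normalize_elt M 0 h0
  obtain ⟨g, hg, g2, gl⟩ := normalize_elt M 2 d2.1
  obtain ⟨h, hh, h4, hl⟩ := normalize_elt M 4 d4.1
  have g0 := gl 0 (by norm_num)
  have g1 := gl 1 (by norm_num)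
  have l0 := hl 0 (by norm_num)
  have l1 := hl 1 (by norm_num)
  have l2 := hl 2 (by norm_num)
  have l3 := hl 3 (by norm_num)
  have mx : ∀ u ∈ M, (X : 𝒪) ^ 6 * u ∈ M := fun u hu => M.smul_mem ⟨_, x_mem⟩ hu
  have my : ∀ u ∈ M, ((X : 𝒪) ^ 8 + X ^ 9) * u ∈ M := fun u hu => M.smul_mem ⟨_, y_mem⟩ hu
  have e1 := key 9 (by simp) _ (sub_mem (mx g hg) (my f hf)) (by
    intro m hm
    interval_cases m <;> simp [add_mul, coeff_X_pow_mul', -coeff_zero_eq_constantCoeff, *])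
  have e2 := key 11 (by simp) _ (sub_mem (mx h hh) (my g hg)) (by
    intro m hm
    interval_cases m <;> simp [add_mul, coeff_X_pow_mul', -coeff_zero_eq_constantCoeff, *])
  have e3 := key 13 (by simp) _ (sub_mem (my h hh) (mx _ (mx f hf))) (by
    intro m hm
    interval_cases m <;> simp [add_mul, coeff_X_pow_mul', -coeff_zero_eq_constantCoeff, *])
  simp [add_mul, coeff_X_pow_mul', -coeff_zero_eq_constantCoeff, f0, g2, h4] at e1 e2 e3
  have : (3 : ℂ) = 0 := by linear_combination e3 - e2 - e1
  norm_num at this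

/-- For `ℛ = ℂ[z^6, z^8+z^9] + z^{36}ℂ⟦z⟧` (value semigroup `⟨6,8,25⟩`) and
`D = {10,17,19,23,27,29,35}`: there are standard modules with `D`-set `D ∪ {2}`
and with `D`-set `D ∪ {4}`, but none with `D`-set `D ∪ {2,4}`. -/
theorem statement19 :
    (∃ M : Submodule ↥(Rring 6 8 9 36) 𝒪, IsStd (Rring 6 8 9 36) M ∧
      Dset (Rring 6 8 9 36) M
        = ({10, 17, 19, 23, 27, 29, 35} : Set ℕ) ∪ {2}) ∧
    (∃ M : Submodule ↥(Rring 6 8 9 36) 𝒪, IsStd (Rring 6 8 9 36) M ∧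
      Dset (Rring 6 8 9 36) M
        = ({10, 17, 19, 23, 27, 29, 35} : Set ℕ) ∪ {4}) ∧
    ¬ (∃ M : Submodule ↥(Rring 6 8 9 36) 𝒪, IsStd (Rring 6 8 9 36) M ∧
      Dset (Rring 6 8 9 36) M
        = ({10, 17, 19, 23, 27, 29, 35} : Set ℕ) ∪ {2, 4}) := by
  exact ⟨exists1, exists2, no_module⟩

end
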